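/- arXiv:1106.5942 — 2 statements merged into one kernel-verified Lean document; each statement's English description precedes it below -/
import Mathlib

section
/- Let 𝒜 be a category, P a partially ordered set, and M a monoid, satisfying the amalgamation hypotheses (A1)–(A5) together with: (A6') for each object y of 𝒜 and each m ∈ M there is a morphism f : x ⟶ y with α(F(f)) = m which is universal, meaning that every f' : x' ⟶ y with α(F(f')) = m factors as f' = f ∘ g for some morphism g with α(F(g)) = 1; and (A7') every morphism f of 𝒜 with α(F(f)) = n * m factors as f = g ∘ h with α(F(h)) = m and α(F(g)) = n. Then there is a monotone right action of M on P — given by p · m = β(x) whenever f : x ⟶ β'(p) is a universal morphism with α(F(f)) = m in the sense of (A6') — such that the assignment x ↦ β(x) on objects and f ↦ α(F(f)) on morphisms is a well-defined functor from 𝒜 to P ⋊ M which is full, faithful, and essentially surjective, i.e. an equivalence of categories. -/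
open CategoryTheory

universe u v w x

/-- A monotone right action of a monoid `M` on a poset `P`. -/
structure RightAction (M : Type x) (P : Type w) [Monoid M] [PartialOrder P] where
  act : P → M → P
  act_one : ∀ p, act p 1 = p
  act_mul : ∀ p m n, act p (m * n) = act (act p m) n
  act_mono : ∀ (m : M) ⦃p q : P⦄, p ≤ q → act p m ≤ act q m

/-- Objects of the Grothendieck category `P ⋊ M`: the elements of `P`; a morphism
`p ⟶ q` is an element `m : M` with `p ≤ q · m`; identities are `1` and the composite
of `m : p ⟶ q` followed by `n : q ⟶ r` is `n * m`. -/
structure Groth {M : Type x} {P : Type w} [Monoid M] [PartialOrder P]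
    (ρ : RightAction M P) : Type w where
  pt : P

instance {M : Type x} {P : Type w} [Monoid M] [PartialOrder P] (ρ : RightAction M P) :
    Category.{x} (Groth ρ) where
  Hom p q := { m : M // p.pt ≤ ρ.act q.pt m }
  id p := ⟨1, (ρ.act_one p.pt).ge⟩
  comp {p q r} m n :=
    ⟨n.1 * m.1, by rw [ρ.act_mul]; exact le_trans m.2 (ρ.act_mono m.1 n.2)⟩
  id_comp f := Subtype.ext (mul_one _)
  comp_id f := Subtype.ext (one_mul _)
  assoc f g h := Subtype.ext (mul_assoc _ _ _).symm

/-!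
Combining `F` and `α` gives a functor `𝒜 ⥤ SingleObj M`, and (A6') provides it with a cartesian lift
of every `m : M` at every object. Such lifts are monotone in the target, so sending the target of a
lift to its source descends along `β` to an operation of `M` on `P`; the lifts compose by (A7'),
which makes this operation an action. By the universal property there is a morphism `x ⟶ y` over `m`
exactly when `β x ≤ β y · m`, which is the description of the morphisms of `P ⋊ M`.
-/

section Degree

variable {𝒜 : Type u} [Category.{v} 𝒜] {M : Type x} [Monoid M] (D : 𝒜 ⥤ SingleObj M)

/-- The degree of a morphism: its image under a functor to the one-object category of a monoid,
as an element of the monoid. In the setting of (A2) and (A3) it is `α (F f)`. -/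
def degree {a b : 𝒜} (f : a ⟶ b) : M := D.map f

lemma degree_id (a : 𝒜) : degree D (𝟙 a) = 1 := D.map_id a

lemma degree_comp {a b c : 𝒜} (f : a ⟶ b) (g : b ⟶ c) :
    degree D (f ≫ g) = degree D g * degree D f := D.map_comp f g

/-- Universal morphisms of degree `m` in the sense of (A6'): cartesian lifts of `m`, except that
the factorization is not required to be unique. -/
def IsUniversal {a b : 𝒜} (m : M) (f : a ⟶ b) : Prop :=
  degree D f = m ∧ ∀ (a' : 𝒜) (f' : a' ⟶ b), degree D f' = m →
    ∃ g : a' ⟶ a, degree D g = 1 ∧ f' = g ≫ f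

/-- The existence of universal morphisms, (A6'). -/
def HasUniversals : Prop :=
  ∀ (b : 𝒜) (m : M), ∃ (a : 𝒜) (f : a ⟶ b), IsUniversal D m f

/-- The lifting of factorizations from `M` to `𝒜`, (A7'). -/
def LiftsFactorizations : Prop :=
  ∀ (a b : 𝒜) (f : a ⟶ b) (m n : M), degree D f = n * m →
    ∃ (c : 𝒜) (h : a ⟶ c) (g : c ⟶ b), degree D h = m ∧ degree D g = n ∧ f = h ≫ g

/-- `β` exhibits its image as the poset reflection of the objects, preordered by the existence of
a morphism of degree `1`. -/
def ReflectsOrder {P : Type w} [PartialOrder P] (β : 𝒜 → P) : Prop :=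
  ∀ a b : 𝒜, β a ≤ β b ↔ ∃ f : a ⟶ b, degree D f = 1

end Degree

section Universal

variable {𝒜 : Type u} [Category.{v} 𝒜] {M : Type x} [Monoid M] {D : 𝒜 ⥤ SingleObj M}
  {a b c a' b' : 𝒜} {m n : M}

lemma isUniversal_id (a : 𝒜) : IsUniversal D 1 (𝟙 a) :=
  ⟨degree_id D a, fun _ f hf => ⟨f, hf, (Category.comp_id f).symm⟩⟩

lemma IsUniversal.comp (hD : LiftsFactorizations D) {f : a ⟶ b} {g : b ⟶ c}
    (hf : IsUniversal D n f) (hg : IsUniversal D m g) : IsUniversal D (m * n) (f ≫ g) := by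
  refine ⟨by rw [degree_comp, hf.1, hg.1], fun a' k hk => ?_⟩
  obtain ⟨b', h, l, hh, hl, rfl⟩ := hD a' c k n m hk
  obtain ⟨s, hs, rfl⟩ := hg.2 b' l hl
  obtain ⟨t, ht, hst⟩ := hf.2 a' (h ≫ s) (by rw [degree_comp, hs, hh, one_mul])
  exact ⟨t, ht, by rw [← Category.assoc, hst, Category.assoc]⟩

variable {P : Type w} [PartialOrder P] {β : 𝒜 → P}

lemma IsUniversal.le_source_iff (hβ : ReflectsOrder D β) {f : b ⟶ c} (hf : IsUniversal D m f) :
    β a ≤ β b ↔ ∃ g : a ⟶ c, degree D g = m := by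
  rw [hβ]
  constructor
  · rintro ⟨g, hg⟩
    exact ⟨g ≫ f, by rw [degree_comp, hf.1, hg, mul_one]⟩
  · rintro ⟨k, hk⟩
    obtain ⟨g, hg, -⟩ := hf.2 a k hk
    exact ⟨g, hg⟩

lemma IsUniversal.source_le (hβ : ReflectsOrder D β) {f : a ⟶ b} {f' : a' ⟶ b'}
    (hf : IsUniversal D m f) (hf' : IsUniversal D m f') (h : β b ≤ β b') : β a ≤ β a' := by
  obtain ⟨g, hg⟩ := (hβ b b').1 h
  exact (hf'.le_source_iff hβ).2 ⟨f ≫ g, by rw [degree_comp, hg, hf.1, one_mul]⟩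

lemma IsUniversal.source_eq (hβ : ReflectsOrder D β) {f : a ⟶ b} {f' : a' ⟶ b'}
    (hf : IsUniversal D m f) (hf' : IsUniversal D m f') (h : β b = β b') : β a = β a' :=
  le_antisymm (hf.source_le hβ hf' h.le) (hf'.source_le hβ hf h.ge)

lemma reflectsOrder_of_monotone_inverse {β' : P → 𝒜}
    (β_mono : ∀ a b : 𝒜, (∃ f : a ⟶ b, degree D f = 1) → β a ≤ β b)
    (β'_mono : ∀ p q : P, p ≤ q → ∃ f : β' p ⟶ β' q, degree D f = 1)
    (β'_β_le : ∀ a : 𝒜, ∃ f : β' (β a) ⟶ a, degree D f = 1)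
    (le_β'_β : ∀ a : 𝒜, ∃ f : a ⟶ β' (β a), degree D f = 1) : ReflectsOrder D β := by
  refine fun a b => ⟨fun h => ?_, β_mono a b⟩
  obtain ⟨f, hf⟩ := le_β'_β a
  obtain ⟨g, hg⟩ := β'_mono _ _ h
  obtain ⟨k, hk⟩ := β'_β_le b
  exact ⟨f ≫ g ≫ k, by simp only [degree_comp, hf, hg, hk, mul_one]⟩

end Universal

section Action

variable {𝒜 : Type u} [Category.{v} 𝒜] {M : Type x} [Monoid M] {D : 𝒜 ⥤ SingleObj M}
  {P : Type w} [PartialOrder P] {β : 𝒜 → P}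

/-- The element `p · m` of `P`: the class of the source of a universal morphism of degree `m` into
a chosen representative of `p`. -/
noncomputable def universalSource (hβ_surj : Function.Surjective β) (hU : HasUniversals D)
    (p : P) (m : M) : P :=
  β (hU (Function.surjInv hβ_surj p) m).choose

lemma universalSource_eq (hβ : ReflectsOrder D β) (hβ_surj : Function.Surjective β)
    (hU : HasUniversals D) {a b : 𝒜} {m : M} {f : a ⟶ b} (hf : IsUniversal D m f) :
    universalSource hβ_surj hU (β b) m = β a :=
  (hU _ m).choose_spec.choose_spec.source_eq hβ hf (Function.surjInv_eq hβ_surj (β b))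

/-- The action of `M` on `P` by sources of universal morphisms. -/
noncomputable def universalAction (hβ : ReflectsOrder D β) (hβ_surj : Function.Surjective β)
    (hU : HasUniversals D) (hD : LiftsFactorizations D) : RightAction M P where
  act := universalSource hβ_surj hU
  act_one p := by
    obtain ⟨a, rfl⟩ := hβ_surj p
    exact universalSource_eq hβ hβ_surj hU (isUniversal_id a)
  act_mul p m n := by
    obtain ⟨c, rfl⟩ := hβ_surj p
    obtain ⟨b, g, hg⟩ := hU c m
    obtain ⟨a, f, hf⟩ := hU b n
    rw [universalSource_eq hβ hβ_surj hU hg, universalSource_eq hβ hβ_surj hU hf,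
      universalSource_eq hβ hβ_surj hU (hf.comp hD hg)]
  act_mono m p q hpq := by
    obtain ⟨b, rfl⟩ := hβ_surj p
    obtain ⟨b', rfl⟩ := hβ_surj q
    obtain ⟨a, f, hf⟩ := hU b m
    obtain ⟨a', f', hf'⟩ := hU b' m
    rw [universalSource_eq hβ hβ_surj hU hf, universalSource_eq hβ hβ_surj hU hf']
    exact hf.source_le hβ hf' hpq

variable (hβ : ReflectsOrder D β) (hβ_surj : Function.Surjective β) (hU : HasUniversals D)
  (hD : LiftsFactorizations D)

lemma le_universalAction_iff {a b : 𝒜} {m : M} :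
    β a ≤ (universalAction hβ hβ_surj hU hD).act (β b) m ↔ ∃ f : a ⟶ b, degree D f = m := by
  obtain ⟨c, u, hu⟩ := hU b m
  have hact : (universalAction hβ hβ_surj hU hD).act (β b) m = β c :=
    universalSource_eq hβ hβ_surj hU hu
  rw [hact, hu.le_source_iff hβ]

/-- The comparison functor from `𝒜` to `P ⋊ M`, given by `β` on objects and by the degree on
morphisms. -/
noncomputable def toGroth : 𝒜 ⥤ Groth (universalAction hβ hβ_surj hU hD) where
  obj a := ⟨β a⟩
  map f := ⟨degree D f, (le_universalAction_iff hβ hβ_surj hU hD).2 ⟨f, rfl⟩⟩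
  map_id a := Subtype.ext (degree_id D a)
  map_comp f g := Subtype.ext (degree_comp D f g)

lemma toGroth_full : (toGroth hβ hβ_surj hU hD).Full where
  map_surjective m := by
    obtain ⟨f, hf⟩ := (le_universalAction_iff hβ hβ_surj hU hD).1 m.2
    exact ⟨f, Subtype.ext hf⟩

lemma toGroth_faithful [D.Faithful] : (toGroth hβ hβ_surj hU hD).Faithful where
  map_injective h := D.map_injective (congrArg Subtype.val h)

lemma toGroth_essSurj : (toGroth hβ hβ_surj hU hD).EssSurj where
  mem_essImage p := by
    obtain ⟨a, ha⟩ := hβ_surj p.pt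
    exact ⟨a, ⟨eqToIso (congrArg Groth.mk ha)⟩⟩

end Action

theorem stmt10_general {𝒜 : Type u} [Category.{v} 𝒜] {P : Type w} [PartialOrder P]
    {M : Type x} [Monoid M] (D : 𝒜 ⥤ SingleObj M) [D.Faithful] (β : 𝒜 → P)
    (hβ : ReflectsOrder D β) (hβ_surj : Function.Surjective β) (hU : HasUniversals D)
    (hD : LiftsFactorizations D) :
    ∃ ρ : RightAction M P,
      (∀ (b : 𝒜) (m : M) (a : 𝒜) (f : a ⟶ b), IsUniversal D m f → ρ.act (β b) m = β a) ∧
      ∃ Φ : 𝒜 ⥤ Groth ρ,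
        (∀ a : 𝒜, (Φ.obj a).pt = β a) ∧
        (∀ (a b : 𝒜) (f : a ⟶ b), ((Φ.map f).1 : M) = degree D f) ∧
        Φ.Full ∧ Φ.Faithful ∧ Φ.EssSurj :=
  ⟨universalAction hβ hβ_surj hU hD, fun _ _ _ _ => universalSource_eq hβ hβ_surj hU,
    toGroth hβ hβ_surj hU hD, fun _ => rfl, fun _ _ _ => rfl, toGroth_full hβ hβ_surj hU hD,
    toGroth_faithful hβ hβ_surj hU hD, toGroth_essSurj hβ hβ_surj hU hD⟩

/-- Under the amalgamation hypotheses (A1')--(A5') together with (A6')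
(existence of universal morphisms with prescribed image in `M`) and (A7')
(factorization), for a category `𝒜`, a poset `P` and a monoid `M`, there is a
monotone right action of `M` on `P` (given by `p · m = β x` whenever `f : x ⟶ β' p`
is a universal morphism with `α (F f) = m`) such that `x ↦ β x`, `f ↦ α (F f)` is a
well-defined functor from `𝒜` to the Grothendieck category `P ⋊ M`, and this functor
is full, faithful and essentially surjective, i.e. an equivalence of categories. -/
theorem stmt10 {𝒜 : Type u} [Category.{v} 𝒜] {P : Type w} [PartialOrder P]
    {M : Type x} [Monoid M]
    -- (A1): weakly initial object, unique up to isomorphism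
    (O : 𝒜) (weakInit : ∀ y : 𝒜, Nonempty (O ⟶ y))
    (weakInitUnique : ∀ O' : 𝒜, (∀ y : 𝒜, Nonempty (O' ⟶ y)) → Nonempty (O ≅ O'))
    -- (A2): faithful retraction of the inclusion of the one-object category End(0)
    (F : ∀ {x y : 𝒜}, (x ⟶ y) → (O ⟶ O))
    (F_id : ∀ x : 𝒜, F (𝟙 x) = 𝟙 O)
    (F_comp : ∀ {x y z : 𝒜} (f : x ⟶ y) (g : y ⟶ z), F (f ≫ g) = F f ≫ F g)
    (F_faithful : ∀ {x y : 𝒜} (f g : x ⟶ y), F f = F g → f = g)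
    (F_retraction : ∀ f : O ⟶ O, F f = f)
    -- (A3): a monoid isomorphism α : End(0) → G
    (α : (O ⟶ O) → M) (α_bij : Function.Bijective α)
    (α_one : α (𝟙 O) = 1)
    (α_mul : ∀ f g : O ⟶ O, α (f ≫ g) = α g * α f)
    -- (A4): an equivalence of preorders between (Ob 𝒜, ≤) and P
    (β : 𝒜 → P) (β' : P → 𝒜)
    (β_mono : ∀ x y : 𝒜, (∃ f : x ⟶ y, α (F f) = 1) → β x ≤ β y)
    (β'_mono : ∀ p q : P, p ≤ q → ∃ f : β' p ⟶ β' q, α (F f) = 1)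
    (β_β' : ∀ p : P, β (β' p) = p)
    (β'_β_le : ∀ x : 𝒜, ∃ f : β' (β x) ⟶ x, α (F f) = 1)
    (le_β'_β : ∀ x : 𝒜, ∃ f : x ⟶ β' (β x), α (F f) = 1)
    -- (A5)
    (A5 : ∀ x : 𝒜, ∃ f : x ≅ β' (β x), α (F f.hom) = 1)
    -- (A6'): universal morphisms with prescribed image in M
    (A6' : ∀ (y : 𝒜) (m : M), ∃ (x : 𝒜) (f : x ⟶ y), α (F f) = m ∧
      ∀ (x' : 𝒜) (f' : x' ⟶ y), α (F f') = m →
        ∃ g : x' ⟶ x, α (F g) = 1 ∧ f' = g ≫ f)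
    -- (A7'): factorization of morphisms along factorizations in M
    (A7' : ∀ (x y : 𝒜) (f : x ⟶ y) (m n : M), α (F f) = n * m →
      ∃ (z : 𝒜) (h : x ⟶ z) (g : z ⟶ y), α (F h) = m ∧ α (F g) = n ∧ f = h ≫ g) :
    ∃ ρ : RightAction M P,
      (∀ (p : P) (m : M) (x : 𝒜) (f : x ⟶ β' p), α (F f) = m →
        (∀ (x' : 𝒜) (f' : x' ⟶ β' p), α (F f') = m →
          ∃ g : x' ⟶ x, α (F g) = 1 ∧ f' = g ≫ f) →
        ρ.act p m = β x) ∧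
      ∃ Φ : 𝒜 ⥤ Groth ρ,
        (∀ x : 𝒜, (Φ.obj x).pt = β x) ∧
        (∀ (x y : 𝒜) (f : x ⟶ y), ((Φ.map f).1 : M) = α (F f)) ∧
        Φ.Full ∧ Φ.Faithful ∧ Φ.EssSurj := by
  let D : 𝒜 ⥤ SingleObj M :=
    { obj := fun _ => SingleObj.star M
      map := fun f => α (F f)
      map_id := fun a => (congrArg α (F_id a)).trans α_one
      map_comp := fun f g => (congrArg α (F_comp f g)).trans (α_mul _ _) }
  have : D.Faithful := ⟨fun h => F_faithful _ _ (α_bij.injective h)⟩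
  have hβ : ReflectsOrder D β :=
    reflectsOrder_of_monotone_inverse β_mono β'_mono β'_β_le le_β'_β
  obtain ⟨ρ, hρ, hΦ⟩ := stmt10_general D β hβ (Function.LeftInverse.surjective β_β') A6' A7'
  exact ⟨ρ, fun p m a f hf hf' => β_β' p ▸ hρ (β' p) m a f ⟨hf, hf'⟩, hΦ⟩
end

section
/- Let X be a compact Hausdorff space. The map sending an equivalence relation r on X with closed graph to the set {f ∈ C(X, ℂ) | ∀ x y, r x y → f x = f y} is a bijection from P(X) onto the set of unital closed star-subalgebras of the C*-algebra C(X, ℂ) of continuous complex-valued functions on X with supremum norm, and it is order-reversing in both directions: r ≤ s iff the subalgebra associated to s is contained in the subalgebra associated to r. In particular, the poset of commutative unital closed star-subalgebras of C(X, ℂ) ordered by inclusion is order-isomorphic to the order dual of P(X). -/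
universe u

/-- `P(X)`: the poset of equivalence relations on `X` with closed graph, ordered by
refinement. -/
def ClosedEquiv (X : Type u) [TopologicalSpace X] : Type u :=
  { r : Setoid X // IsClosed {p : X × X | r p.1 p.2} }

instance (X : Type u) [TopologicalSpace X] : PartialOrder (ClosedEquiv X) :=
  Subtype.partialOrder _

/-- The unital star-subalgebra of `C(X, ℂ)` associated to an equivalence relation `r`
on `X`: the continuous functions constant on the equivalence classes of `r`. -/
noncomputable def relSubalgebra (X : Type u) [TopologicalSpace X] (r : Setoid X) :
    StarSubalgebra ℂ C(X, ℂ) where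
  carrier := {f : C(X, ℂ) | ∀ x y : X, r x y → f x = f y}
  mul_mem' := fun {a b} ha hb x y h => by
    simp only [ContinuousMap.mul_apply, ha x y h, hb x y h]
  add_mem' := fun {a b} ha hb x y h => by
    simp only [ContinuousMap.add_apply, ha x y h, hb x y h]
  one_mem' := fun x y _ => rfl
  zero_mem' := fun x y _ => rfl
  algebraMap_mem' := fun c x y _ => rfl
  star_mem' := fun {a} ha x y h => by
    simp only [ContinuousMap.star_apply, ha x y h]

/-!
A relation `r` and a subalgebra `S` are in Galois correspondence: `S` consists of functions constant
on the classes of `r` iff `r` identifies only points which `S` does not separate. Both closure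
operators are computed on quotients. If `r` has closed graph, then `X → X / r` is proper, so
`X / r` is compact Hausdorff even if `X` is not Hausdorff, and Urysohn's lemma on `X / r` recovers
`r` from its functions. If `r` is the relation of not being separated by `S`, then `S` descends to a
point-separating subalgebra of `C(X / r, ℂ)`, which is dense by Stone–Weierstrass.
-/

section Quotient

variable {X : Type*} [TopologicalSpace X]

theorem t2Space_of_isProperMap_of_surjective {Y : Type*} [TopologicalSpace Y] {f : X → Y}
    (hf : IsProperMap f) (hsurj : Function.Surjective f)
    (hker : IsClosed {p : X × X | f p.1 = f p.2}) : T2Space Y := by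
  have himage : Prod.map f f '' {p : X × X | f p.1 = f p.2} = Set.diagonal Y := by
    ext ⟨a, b⟩
    constructor
    · rintro ⟨p, hp, h⟩
      exact h ▸ hp
    · rintro (rfl : a = b)
      obtain ⟨x, rfl⟩ := hsurj a
      exact ⟨(x, x), rfl, rfl⟩
  rw [t2_iff_isClosed_diagonal, ← himage]
  exact (hf.prodMap hf).isClosedMap _ hker

/-- The projection `X → X / r` bundled as a continuous map, so that one can precompose with it. -/
def continuousQuotientMk (r : Setoid X) : C(X, Quotient r) :=
  ⟨Quotient.mk r, continuous_quotient_mk'⟩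

variable [CompactSpace X] {r : Setoid X}

theorem isClosedMap_quotient_mk (hr : IsClosed {p : X × X | r p.1 p.2}) :
    IsClosedMap (Quotient.mk r) := by
  intro C hC
  have hsaturation : Quotient.mk r ⁻¹' (Quotient.mk r '' C) =
      Prod.snd '' ({p : X × X | r p.1 p.2} ∩ Prod.fst ⁻¹' C) := by
    ext y
    simp [Quotient.eq, and_comm]
  refine isQuotientMap_quotient_mk'.isClosed_preimage.1 (hsaturation ▸ ?_)
  exact isClosedMap_snd_of_compactSpace _ (hr.inter (hC.preimage continuous_fst))

theorem isProperMap_quotient_mk (hr : IsClosed {p : X × X | r p.1 p.2}) :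
    IsProperMap (Quotient.mk r) := by
  refine isProperMap_iff_isClosedMap_and_compact_fibers.2
    ⟨continuous_quotient_mk', isClosedMap_quotient_mk hr, Quotient.ind fun x => ?_⟩
  have hfiber : Quotient.mk r ⁻¹' {Quotient.mk r x} = {y | r y x} := by
    ext y
    exact Quotient.eq
  rw [hfiber]
  exact (hr.preimage (Continuous.prodMk_left x)).isCompact

theorem t2Space_quotient_of_isClosed (hr : IsClosed {p : X × X | r p.1 p.2}) :
    T2Space (Quotient r) :=
  t2Space_of_isProperMap_of_surjective (isProperMap_quotient_mk hr) Quotient.mk_surjective <| by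
    simpa only [Quotient.eq] using hr

end Quotient

section JointKer

variable {X Y : Type*} [TopologicalSpace X] [TopologicalSpace Y] (F : Set C(X, Y))

/-- The joint kernel of a family `F` of continuous maps: the relation identifying the points that
no member of `F` separates, encoded as the kernel of the evaluation map `X → (F → Y)`. It gives the
inverse of `r ↦ relSubalgebra X r`. -/
def jointKer : Setoid X :=
  Setoid.ker fun x (f : F) => f.1 x

variable {F} in
theorem jointKer_apply {x y : X} : jointKer F x y ↔ ∀ f ∈ F, f x = f y :=
  funext_iff.trans Subtype.forall

theorem isClosed_jointKer [T2Space Y] : IsClosed {p : X × X | jointKer F p.1 p.2} := by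
  have heval : Continuous fun x (f : F) => f.1 x := continuous_pi fun f => f.1.continuous
  exact isClosed_eq (heval.comp continuous_fst) (heval.comp continuous_snd)

end JointKer

section RelSubalgebra

variable {X : Type u} [TopologicalSpace X]

theorem isClosed_relSubalgebra (r : Setoid X) : IsClosed (relSubalgebra X r : Set C(X, ℂ)) := by
  have hinter : (relSubalgebra X r : Set C(X, ℂ)) =
      ⋂ (x : X) (y : X) (_ : r x y), {f | f x = f y} := by
    ext f
    simp only [Set.mem_iInter]
    rfl
  rw [hinter]
  exact isClosed_iInter fun x => isClosed_iInter fun y => isClosed_iInter fun _ =>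
    isClosed_eq (continuous_eval_const x) (continuous_eval_const y)

theorem le_relSubalgebra_iff_le_jointKer {S : StarSubalgebra ℂ C(X, ℂ)} {r : Setoid X} :
    S ≤ relSubalgebra X r ↔ r ≤ jointKer (S : Set C(X, ℂ)) :=
  ⟨fun h _ _ hxy => jointKer_apply.2 fun _ hf => h hf _ _ hxy,
    fun h f hf _ _ hxy => jointKer_apply.1 (h hxy) f hf⟩

theorem relSubalgebra_eq_range (r : Setoid X) :
    relSubalgebra X r =
      (ContinuousMap.compStarAlgHom' ℂ ℂ (continuousQuotientMk r)).range := by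
  ext f
  constructor
  · intro hf
    exact ⟨⟨Quotient.lift f hf, f.continuous.quotient_lift hf⟩, rfl⟩
  · rintro ⟨g, rfl⟩ x y hxy
    exact congrArg g (Quotient.sound hxy)

theorem separatesPoints_comap_continuousQuotientMk_jointKer (S : StarSubalgebra ℂ C(X, ℂ)) :
    (S.comap (ContinuousMap.compStarAlgHom' ℂ ℂ
      (continuousQuotientMk (jointKer (S : Set C(X, ℂ)))))).SeparatesPoints := by
  refine Quotient.ind₂ fun x y hxy => ?_
  obtain ⟨f, hfS, hfxy⟩ : ∃ f ∈ S, f x ≠ f y := by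
    by_contra! h
    exact hxy (Quotient.sound (jointKer_apply.2 h))
  have hf : f ∈ relSubalgebra X (jointKer (S : Set C(X, ℂ))) :=
    le_relSubalgebra_iff_le_jointKer.2 le_rfl hfS
  rw [relSubalgebra_eq_range] at hf
  obtain ⟨g, rfl⟩ := hf
  exact ⟨g, ⟨g, hfS, rfl⟩, hfxy⟩

variable [CompactSpace X]

theorem jointKer_relSubalgebra {r : Setoid X} (hr : IsClosed {p : X × X | r p.1 p.2}) :
    jointKer (relSubalgebra X r : Set C(X, ℂ)) = r := by
  refine le_antisymm (fun x y hxy => ?_) (le_relSubalgebra_iff_le_jointKer.1 le_rfl)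
  have := t2Space_quotient_of_isClosed hr
  by_contra hne
  obtain ⟨g, hg, hgxy⟩ := separatesPoints_continuous_of_t35Space
    (fun h : Quotient.mk r x = Quotient.mk r y => hne (Quotient.exact h))
  let f : C(Quotient r, ℂ) := ⟨fun q => (g q : ℂ), Complex.continuous_ofReal.comp hg⟩
  have hf : f.comp (continuousQuotientMk r) ∈ relSubalgebra X r :=
    relSubalgebra_eq_range r ▸ ⟨f, rfl⟩
  exact hgxy (Complex.ofReal_injective (jointKer_apply.1 hxy _ hf))

theorem relSubalgebra_jointKer (S : StarSubalgebra ℂ C(X, ℂ)) :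
    relSubalgebra X (jointKer (S : Set C(X, ℂ))) = S.topologicalClosure := by
  set r := jointKer (S : Set C(X, ℂ))
  refine le_antisymm ?_ (StarSubalgebra.topologicalClosure_minimal
    (le_relSubalgebra_iff_le_jointKer.2 le_rfl) (isClosed_relSubalgebra r))
  let φ := ContinuousMap.compStarAlgHom' ℂ ℂ (continuousQuotientMk r)
  have hdense : (S.comap φ).topologicalClosure = ⊤ :=
    ContinuousMap.starSubalgebra_topologicalClosure_eq_top_of_separatesPoints _
      (separatesPoints_comap_continuousQuotientMk_jointKer S)
  have hφ : Continuous φ := ContinuousMap.continuous_precomp _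
  calc relSubalgebra X r = φ.range := relSubalgebra_eq_range r
    _ = (S.comap φ).topologicalClosure.map φ := by rw [hdense, StarAlgHom.range_eq_map_top]
    _ ≤ ((S.comap φ).map φ).topologicalClosure :=
      StarSubalgebra.map_topologicalClosure_le _ φ hφ
    _ ≤ S.topologicalClosure :=
      StarSubalgebra.topologicalClosure_mono (StarSubalgebra.map_le_iff_le_comap.2 le_rfl)

theorem relSubalgebra_jointKer_of_isClosed {S : StarSubalgebra ℂ C(X, ℂ)}
    (hS : IsClosed (S : Set C(X, ℂ))) : relSubalgebra X (jointKer (S : Set C(X, ℂ))) = S := by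
  rw [relSubalgebra_jointKer]
  exact SetLike.coe_injective hS.closure_eq

theorem relSubalgebra_le_relSubalgebra_iff {r s : Setoid X}
    (hs : IsClosed {p : X × X | s p.1 p.2}) :
    relSubalgebra X s ≤ relSubalgebra X r ↔ r ≤ s := by
  rw [le_relSubalgebra_iff_le_jointKer, jointKer_relSubalgebra hs]

end RelSubalgebra

/-- The anti-isomorphism between closed equivalence relations on a compact space `X` and unital
closed star-subalgebras of `C(X, ℂ)`, as an order isomorphism from the order dual. -/
noncomputable def closedEquivOrderIso (X : Type u) [TopologicalSpace X] [CompactSpace X] :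
    (ClosedEquiv X)ᵒᵈ ≃o { S : StarSubalgebra ℂ C(X, ℂ) // IsClosed (S : Set C(X, ℂ)) } where
  toFun r := ⟨relSubalgebra X r.ofDual.1, isClosed_relSubalgebra _⟩
  invFun S := OrderDual.toDual ⟨jointKer (S.1 : Set C(X, ℂ)), isClosed_jointKer _⟩
  left_inv r := congrArg OrderDual.toDual (Subtype.ext (jointKer_relSubalgebra r.ofDual.2))
  right_inv S := Subtype.ext (relSubalgebra_jointKer_of_isClosed S.2)
  map_rel_iff' {r _} := relSubalgebra_le_relSubalgebra_iff r.ofDual.2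

theorem stmt12_general (X : Type u) [TopologicalSpace X] [CompactSpace X] :
    (∀ r : ClosedEquiv X, IsClosed ((relSubalgebra X r.1 : Set C(X, ℂ)))) ∧
    Function.Injective (fun r : ClosedEquiv X => relSubalgebra X r.1) ∧
    (∀ S : StarSubalgebra ℂ C(X, ℂ), IsClosed (S : Set C(X, ℂ)) →
      ∃ r : ClosedEquiv X, relSubalgebra X r.1 = S) ∧
    (∀ r s : ClosedEquiv X, r ≤ s ↔ relSubalgebra X s.1 ≤ relSubalgebra X r.1) ∧
    Nonempty ((ClosedEquiv X)ᵒᵈ ≃o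
      { S : StarSubalgebra ℂ C(X, ℂ) // IsClosed (S : Set C(X, ℂ)) }) := by
  refine ⟨fun r => isClosed_relSubalgebra r.1, fun r s hrs => ?_, fun S hS => ?_,
    fun r s => (relSubalgebra_le_relSubalgebra_iff s.2).symm, ⟨closedEquivOrderIso X⟩⟩
  · exact OrderDual.toDual.injective ((closedEquivOrderIso X).injective (Subtype.ext hrs))
  · exact ⟨⟨jointKer (S : Set C(X, ℂ)), isClosed_jointKer _⟩, relSubalgebra_jointKer_of_isClosed hS⟩

/-- Let `X` be a compact Hausdorff space.  The map sending an
equivalence relation `r` on `X` with closed graph to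
`{f ∈ C(X, ℂ) | ∀ x y, r x y → f x = f y}` is a bijection from `P(X)` onto the set
of unital closed star-subalgebras of the C*-algebra `C(X, ℂ)`, and it is
order-reversing in both directions.  In particular, the poset of unital closed
star-subalgebras of `C(X, ℂ)` under inclusion is order-isomorphic to the order dual
of `P(X)`. -/
theorem stmt12 (X : Type u) [TopologicalSpace X] [CompactSpace X] [T2Space X] :
    -- the associated subalgebra is closed
    (∀ r : ClosedEquiv X, IsClosed ((relSubalgebra X r.1 : Set C(X, ℂ)))) ∧
    -- injectivity
    Function.Injective (fun r : ClosedEquiv X => relSubalgebra X r.1) ∧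
    -- surjectivity onto the unital closed star-subalgebras
    (∀ S : StarSubalgebra ℂ C(X, ℂ), IsClosed (S : Set C(X, ℂ)) →
      ∃ r : ClosedEquiv X, relSubalgebra X r.1 = S) ∧
    -- order-reversing in both directions
    (∀ r s : ClosedEquiv X, r ≤ s ↔ relSubalgebra X s.1 ≤ relSubalgebra X r.1) ∧
    -- hence: order isomorphism with the order dual
    Nonempty ((ClosedEquiv X)ᵒᵈ ≃o
      { S : StarSubalgebra ℂ C(X, ℂ) // IsClosed (S : Set C(X, ℂ)) }) :=
  stmt12_general X
end
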